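/- arXiv:2511.01996 — 3 statements merged into one kernel-verified Lean document; each statement's English description precedes it below -/
import Mathlib

section
/- Let H be a finite-dimensional complex Hilbert space, Ŷ a self-adjoint operator on H with nondegenerate spectrum and orthonormal eigenbasis (φ_y)_{y∈σ(Ŷ)}, X̂ an operator on H, and ρ̂ a density matrix with ⟨φ_y, ρ̂ φ_y⟩ ≠ 0 for all y ∈ σ(Ŷ). Then the function f ↦ Tr(ρ̂ (X̂ − f(Ŷ)) (X̂ − f(Ŷ))†), over functions f : σ(Ŷ) → ℂ, admits the unique minimizer f₀^r(y) = ⟨φ_y, ρ̂ X̂ φ_y⟩ / ⟨φ_y, ρ̂ φ_y⟩. -/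
open scoped ComplexOrder
noncomputable section

variable {H : Type*} [NormedAddCommGroup H] [InnerProductSpace ℂ H] [FiniteDimensional ℂ H]

/-- The rank-one orthogonal projector onto the line spanned by a unit vector `v`. -/
def proj (v : H) : H →ₗ[ℂ] H where
  toFun w := (inner ℂ v w : ℂ) • v
  map_add' x y := by simp [inner_add_right, add_smul]
  map_smul' c x := by simp [inner_smul_right, smul_smul]

/-- The operator `f(Ŷ) = Σ_y f(y) Π_y` associated to a function `f` on the spectrum,
for an operator with orthonormal eigenbasis `φ`. -/
def opF {ι : Type*} [Fintype ι] (φ : ι → H) (f : ι → ℂ) : H →ₗ[ℂ] H :=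
  ∑ i, f i • proj (φ i)


/-- The "right" squared error `Tr(ρ̂ (X̂ − f(Ŷ)) (X̂ − f(Ŷ))†)`. -/
def errR {ι : Type*} [Fintype ι] (φ : ι → H) (ρ X : H →ₗ[ℂ] H) (f : ι → ℂ) : ℂ :=
  LinearMap.trace ℂ H
    (ρ ∘ₗ ((X - opF φ f) ∘ₗ LinearMap.adjoint (X - opF φ f)))

/-!
Expanding the trace in the eigenbasis `φ` writes the error as `∑ i, ‖X̂ φ_i - f i • φ_i‖²` in the
seminorm of the positive form `(u, v) ↦ ⟪u, ρ̂ v⟫`. The summands can therefore be minimized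
separately: `f i • φ_i` has to be a `ρ̂`-orthogonal projection of `X̂ φ_i` onto the line `ℂ φ_i`,
and Pythagoras' theorem computes the excess error of any other choice.
-/

section PositiveForms

theorem isPositive_iff_inner_map_self_nonneg {V : Type*} [NormedAddCommGroup V]
    [InnerProductSpace ℂ V] {T : V →ₗ[ℂ] V} :
    T.IsPositive ↔ ∀ v, 0 ≤ inner ℂ v (T v) := by
  refine ⟨fun hT => hT.inner_nonneg_right, fun h => ?_⟩
  have h_left (v : V) : 0 ≤ inner ℂ (T v) v := by
    rw [← inner_conj_symm]
    exact star_nonneg_iff.mpr (h v)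
  have h_symm : T.IsSymmetric := (LinearMap.isSymmetric_iff_inner_map_self_real T).mpr fun v =>
    (IsSelfAdjoint.of_nonneg (h_left v)).star_eq
  exact T.isPositive_iff.mpr ⟨h_symm, h_left⟩

variable {𝕜 E : Type*} [RCLike 𝕜] [NormedAddCommGroup E] [InnerProductSpace 𝕜 E]

theorem inner_map_eq_zero_of_inner_map_self_eq_zero {T : E →ₗ[𝕜] E} (hT : T.IsPositive) {e : E}
    (he : inner 𝕜 e (T e) = 0) (u : E) : inner 𝕜 e (T u) = 0 := by
  let form : PreInnerProductSpace.Core 𝕜 E :=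
    { inner := fun u v => inner 𝕜 u (T v)
      conj_inner_symm := fun u v => by rw [inner_conj_symm, hT.isSymmetric]
      re_inner_nonneg := hT.re_inner_nonneg_right
      add_left := fun u v w => inner_add_left u v (T w)
      smul_left := fun u v c => inner_smul_left u (T v) c }
  have cauchy_schwarz :
      ‖inner 𝕜 e (T u)‖ * ‖inner 𝕜 u (T e)‖ ≤
        RCLike.re (inner 𝕜 e (T e)) * RCLike.re (inner 𝕜 u (T u)) :=
    @InnerProductSpace.Core.inner_mul_inner_self_le 𝕜 E _ _ _ form e u
  have norm_symm : ‖inner 𝕜 u (T e)‖ = ‖inner 𝕜 e (T u)‖ := by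
    rw [← hT.isSymmetric, norm_inner_symm]
  rw [he, map_zero, zero_mul, norm_symm] at cauchy_schwarz
  exact norm_eq_zero.mp (mul_self_eq_zero.mp (cauchy_schwarz.antisymm (mul_self_nonneg _)))

theorem exists_inner_map_self_mul_eq {T : E →ₗ[𝕜] E} (hT : T.IsPositive) (e u : E) :
    ∃ c : 𝕜, inner 𝕜 e (T e) * c = inner 𝕜 e (T u) := by
  by_cases he : inner 𝕜 e (T e) = 0
  · exact ⟨0, by rw [mul_zero, inner_map_eq_zero_of_inner_map_self_eq_zero hT he]⟩
  · exact ⟨inner 𝕜 e (T u) / inner 𝕜 e (T e), mul_div_cancel₀ _ he⟩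

theorem inner_map_self_sub_smul_of_inner_map_eq_zero {T : E →ₗ[𝕜] E} (hT : T.IsSymmetric)
    {e u : E} (h : inner 𝕜 e (T u) = 0) (c : 𝕜) :
    inner 𝕜 (u - c • e) (T (u - c • e)) =
      inner 𝕜 u (T u) + (‖c‖ : 𝕜) ^ 2 * inner 𝕜 e (T e) := by
  have h' : inner 𝕜 u (T e) = 0 := by rw [← hT, inner_eq_zero_symm.mp h]
  simp only [map_sub, map_smul, inner_sub_left, inner_sub_right, inner_smul_left,
    inner_smul_right, h, h', ← RCLike.conj_mul]
  ring

end PositiveForms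

section SquaredError

variable {ι : Type*} [Fintype ι]

theorem opF_apply_of_orthonormal {V : Type*} [NormedAddCommGroup V] [InnerProductSpace ℂ V]
    {φ : ι → V} (hφ : Orthonormal ℂ φ) (f : ι → ℂ) (i : ι) :
    opF φ f (φ i) = f i • φ i := by
  classical
  simp [opF, proj, LinearMap.sum_apply, orthonormal_iff_ite.mp hφ]

theorem errR_eq_sum_inner (φ : OrthonormalBasis ι ℂ H) (ρ X : H →ₗ[ℂ] H) (f : ι → ℂ) :
    errR φ ρ X f = ∑ i, inner ℂ (X (φ i) - f i • φ i) (ρ (X (φ i) - f i • φ i)) := by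
  rw [errR, ← LinearMap.comp_assoc, LinearMap.trace_comp_comm', LinearMap.trace_eq_sum_inner _ φ]
  simp only [LinearMap.comp_apply, LinearMap.adjoint_inner_right, LinearMap.sub_apply,
    opF_apply_of_orthonormal φ.orthonormal]

theorem errR_eq_errR_add_sum (φ : OrthonormalBasis ι ℂ H) {ρ : H →ₗ[ℂ] H} (hρ : ρ.IsSymmetric)
    (X : H →ₗ[ℂ] H) {f₀ : ι → ℂ}
    (hf₀ : ∀ i, inner ℂ (φ i) (ρ (φ i)) * f₀ i = inner ℂ (φ i) (ρ (X (φ i)))) (f : ι → ℂ) :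
    errR φ ρ X f =
      errR φ ρ X f₀ + ∑ i, (‖f i - f₀ i‖ : ℂ) ^ 2 * inner ℂ (φ i) (ρ (φ i)) := by
  rw [errR_eq_sum_inner, errR_eq_sum_inner, ← Finset.sum_add_distrib]
  refine Finset.sum_congr rfl fun i _ => ?_
  have residual_orthogonal : inner ℂ (φ i) (ρ (X (φ i) - f₀ i • φ i)) = 0 := by
    rw [map_sub, map_smul, inner_sub_right, inner_smul_right, ← hf₀ i, mul_comm, sub_self]
  have residual_split :
      X (φ i) - f i • φ i = X (φ i) - f₀ i • φ i - (f i - f₀ i) • φ i := by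
    module
  rw [residual_split]
  exact inner_map_self_sub_smul_of_inner_map_eq_zero hρ residual_orthogonal _

theorem stmt4_general (φ : OrthonormalBasis ι ℂ H) {ρ : H →ₗ[ℂ] H} (hρ : ρ.IsPositive)
    (X : H →ₗ[ℂ] H) (f : ι → ℂ) :
    (∀ g, errR φ ρ X f ≤ errR φ ρ X g) ↔
      ∀ i, inner ℂ (φ i) (ρ (φ i)) * f i = inner ℂ (φ i) (ρ (X (φ i))) := by
  have excess_nonneg (g h : ι → ℂ) (i : ι) :
      0 ≤ (‖g i - h i‖ : ℂ) ^ 2 * inner ℂ (φ i) (ρ (φ i)) :=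
    mul_nonneg (by exact_mod_cast sq_nonneg ‖g i - h i‖) (hρ.inner_nonneg_right _)
  refine ⟨fun hf i => ?_, fun hf g => ?_⟩
  · choose f₀ hf₀ using fun i => exists_inner_map_self_mul_eq hρ (φ i) (X (φ i))
    have excess_le_zero : ∑ i, (‖f i - f₀ i‖ : ℂ) ^ 2 * inner ℂ (φ i) (ρ (φ i)) ≤ 0 := by
      simpa only [errR_eq_errR_add_sum φ hρ.isSymmetric X hf₀ f, add_le_iff_nonpos_right]
        using hf f₀
    have excess_eq_zero : (‖f i - f₀ i‖ : ℂ) ^ 2 * inner ℂ (φ i) (ρ (φ i)) = 0 :=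
      (Finset.sum_eq_zero_iff_of_nonneg fun j _ => excess_nonneg f f₀ j).mp
        (excess_le_zero.antisymm (Finset.sum_nonneg fun j _ => excess_nonneg f f₀ j))
        i (Finset.mem_univ i)
    rw [← hf₀ i]
    rcases mul_eq_zero.mp excess_eq_zero with h_norm | h_weight
    · have hi : f i = f₀ i := by simpa [sub_eq_zero] using h_norm
      rw [hi]
    · simp only [h_weight, zero_mul]
  · rw [errR_eq_errR_add_sum φ hρ.isSymmetric X hf g]
    exact le_add_of_nonneg_right (Finset.sum_nonneg fun i _ => excess_nonneg g f i)

end SquaredError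

/-- for `Ŷ` self-adjoint with nondegenerate spectrum (orthonormal eigenbasis `φ`,
injective real eigenvalues `y`), `X̂` an operator, and `ρ̂` a density matrix with
`⟨φ_y, ρ̂ φ_y⟩ ≠ 0` for all `y`, the map `f ↦ Tr(ρ̂ (X̂ − f(Ŷ)) (X̂ − f(Ŷ))†)` has the unique
minimizer `f₀^r(y) = ⟨φ_y, ρ̂X̂ φ_y⟩ / ⟨φ_y, ρ̂ φ_y⟩`. -/
theorem stmt4 {ι : Type*} [Fintype ι] (φ : OrthonormalBasis ι ℂ H)
    (Y : H →ₗ[ℂ] H) (y : ι → ℝ) (hy : Function.Injective y)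
    (hY : ∀ i, Y (φ i) = (y i : ℂ) • φ i)
    (ρ : H →ₗ[ℂ] H) (hpos : ∀ v, 0 ≤ (inner ℂ v (ρ v) : ℂ))
    (htr : LinearMap.trace ℂ H ρ = 1)
    (hρ : ∀ i, (inner ℂ (φ i) (ρ (φ i)) : ℂ) ≠ 0) (X : H →ₗ[ℂ] H) :
    (∀ f : ι → ℂ,
      errR (fun i => φ i) ρ X
          (fun i => (inner ℂ (φ i) ((ρ ∘ₗ X) (φ i)) : ℂ) / (inner ℂ (φ i) (ρ (φ i)) : ℂ)) ≤
        errR (fun i => φ i) ρ X f) ∧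
    (∀ f : ι → ℂ, (∀ g : ι → ℂ, errR (fun i => φ i) ρ X f ≤ errR (fun i => φ i) ρ X g) →
      f = fun i => (inner ℂ (φ i) ((ρ ∘ₗ X) (φ i)) : ℂ) / (inner ℂ (φ i) (ρ (φ i)) : ℂ)) := by
  have minimizer_iff := stmt4_general φ (isPositive_iff_inner_map_self_nonneg.mpr hpos) X
  exact ⟨(minimizer_iff _).mpr fun i => mul_div_cancel₀ _ (hρ i), fun f hf =>
    funext fun i => eq_div_of_mul_eq (hρ i) ((mul_comm _ _).trans ((minimizer_iff f).mp hf i))⟩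
end
end

section
/- Let H be a finite-dimensional complex Hilbert space, Ŷ a self-adjoint operator on H with nondegenerate spectrum, 𝒴 the algebra of operators that are functions of Ŷ, and ρ̂ a density matrix with ⟨φ_y, ρ̂ φ_y⟩ ≠ 0 for all y ∈ σ(Ŷ). Then there exists a unique map ℰ : 𝓛(H) → 𝒴 such that (1) ℰ(X̂ f(Ŷ)) = f(Ŷ)ℰ(X̂) for every X̂ ∈ 𝓛(H) and every f : σ(Ŷ) → ℂ, and (2) Tr(ρ̂ ℰ(X̂)) = Tr(ρ̂ X̂) for every X̂ ∈ 𝓛(H); moreover this map is ℰ(X̂) = 𝔼^r_ρ̂(X̂|Ŷ) := Σ_{y∈σ(Ŷ)} (⟨φ_y, ρ̂X̂ φ_y⟩/⟨φ_y, ρ̂ φ_y⟩) Π_y. -/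
open scoped ComplexOrder
noncomputable section

variable {H : Type*} [NormedAddCommGroup H] [InnerProductSpace ℂ H] [FiniteDimensional ℂ H]

/-- The right quantum conditional expectation
`𝔼^r_ρ̂(X̂|Ŷ) = Σ_y (⟨φ_y, ρ̂X̂ φ_y⟩/⟨φ_y, ρ̂ φ_y⟩) Π_y`. -/
def EcondR {ι : Type*} [Fintype ι] (φ : ι → H) (ρ X : H →ₗ[ℂ] H) : H →ₗ[ℂ] H :=
  ∑ i, ((inner ℂ (φ i) ((ρ ∘ₗ X) (φ i)) : ℂ) / (inner ℂ (φ i) (ρ (φ i)) : ℂ)) • proj (φ i)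

/-- The characterizing properties of the right quantum conditional expectation: the map takes
values in the algebra `𝒴` of functions of `Ŷ`, pulls functions of `Ŷ` out (from the right of
the argument), and has the iterated expectation property with respect to `ρ̂`. -/
def IsRightCondExpMap {ι : Type*} [Fintype ι] (φ : ι → H) (ρ : H →ₗ[ℂ] H)
    (E : (H →ₗ[ℂ] H) → (H →ₗ[ℂ] H)) : Prop :=
  (∀ X : H →ₗ[ℂ] H, ∃ f : ι → ℂ, E X = opF φ f) ∧
  (∀ (f : ι → ℂ) (X : H →ₗ[ℂ] H), E (X ∘ₗ opF φ f) = opF φ f ∘ₗ E X) ∧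
  (∀ X : H →ₗ[ℂ] H, LinearMap.trace ℂ H (ρ ∘ₗ E X) = LinearMap.trace ℂ H (ρ ∘ₗ X))

/-!
Since `Tr(A Π_y) = ⟨φ_y, A φ_y⟩`, traces against functions of `Ŷ` only see diagonal entries:
`Tr(A f(Ŷ)) = Σ_y f(y) ⟨φ_y, A φ_y⟩`. If `ℰ(X̂) = g(Ŷ)`, then testing the trace identity on `X̂ Π_y`
and pulling `Π_y` out of `ℰ` gives `g(y) ⟨φ_y, ρ̂ φ_y⟩ = ⟨φ_y, ρ̂X̂ φ_y⟩`, which determines `g`.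
Conversely, for this `g` the trace identity is the expansion of `Tr(ρ̂X̂)` along the basis `φ`.
-/

section Orthonormal

variable {ι : Type*} [Fintype ι]

omit [FiniteDimensional ℂ H]

theorem opF_apply (φ : ι → H) (f : ι → ℂ) (w : H) :
    opF φ f w = ∑ i, f i • (inner ℂ (φ i) w : ℂ) • φ i := by
  simp [opF, proj]

theorem opF_apply_self {φ : ι → H} (hφ : Orthonormal ℂ φ) (f : ι → ℂ) (i : ι) :
    opF φ f (φ i) = f i • φ i := by
  classical
  simp [opF_apply, orthonormal_iff_ite.mp hφ]

theorem opF_comp_opF {φ : ι → H} (hφ : Orthonormal ℂ φ) (f g : ι → ℂ) :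
    opF φ f ∘ₗ opF φ g = opF φ (f * g) := by
  ext w
  simp only [LinearMap.comp_apply, opF_apply φ g, map_sum, map_smul, opF_apply_self hφ,
    opF_apply φ (f * g), Pi.mul_apply]
  exact Finset.sum_congr rfl fun i _ => by module

theorem econdR_eq_opF (φ : ι → H) (ρ X : H →ₗ[ℂ] H) :
    EcondR φ ρ X =
      opF φ fun i => inner ℂ (φ i) ((ρ ∘ₗ X) (φ i)) / inner ℂ (φ i) (ρ (φ i)) :=
  rfl

theorem econdR_comp_opF {φ : ι → H} (hφ : Orthonormal ℂ φ) (ρ X : H →ₗ[ℂ] H) (f : ι → ℂ) :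
    EcondR φ ρ (X ∘ₗ opF φ f) = opF φ f ∘ₗ EcondR φ ρ X := by
  rw [econdR_eq_opF, econdR_eq_opF, opF_comp_opF hφ]
  congr 1
  ext i
  simp only [LinearMap.comp_apply, opF_apply_self hφ, map_smul, inner_smul_right, Pi.mul_apply,
    mul_div_assoc]

end Orthonormal

section Trace

variable {ι : Type*} [Fintype ι]

theorem trace_comp_proj (A : H →ₗ[ℂ] H) (v : H) :
    LinearMap.trace ℂ H (A ∘ₗ proj v) = inner ℂ v (A v) := by
  have h : A ∘ₗ proj v = (innerₛₗ ℂ v).smulRight (A v) := by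
    ext w
    simp [proj]
  rw [h, LinearMap.trace_smulRight, innerₛₗ_apply_apply]

theorem trace_comp_opF (φ : ι → H) (A : H →ₗ[ℂ] H) (f : ι → ℂ) :
    LinearMap.trace ℂ H (A ∘ₗ opF φ f) = ∑ i, f i * inner ℂ (φ i) (A (φ i)) := by
  have h : A ∘ₗ opF φ f = ∑ i, f i • (A ∘ₗ proj (φ i)) := by
    ext w
    simp [opF]
  simp only [h, map_sum, map_smul, trace_comp_proj, smul_eq_mul]

theorem trace_comp_econdR (φ : OrthonormalBasis ι ℂ H) {ρ : H →ₗ[ℂ] H}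
    (hρ : ∀ i, inner ℂ (φ i) (ρ (φ i)) ≠ 0) (X : H →ₗ[ℂ] H) :
    LinearMap.trace ℂ H (ρ ∘ₗ EcondR φ ρ X) = LinearMap.trace ℂ H (ρ ∘ₗ X) := by
  rw [econdR_eq_opF, trace_comp_opF, LinearMap.trace_eq_sum_inner _ φ]
  exact Finset.sum_congr rfl fun i _ => div_mul_cancel₀ _ (hρ i)

theorem isRightCondExpMap_econdR (φ : OrthonormalBasis ι ℂ H) {ρ : H →ₗ[ℂ] H}
    (hρ : ∀ i, inner ℂ (φ i) (ρ (φ i)) ≠ 0) :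
    IsRightCondExpMap φ ρ (EcondR φ ρ) :=
  ⟨fun X => ⟨_, econdR_eq_opF φ ρ X⟩, fun f X => econdR_comp_opF φ.orthonormal ρ X f,
    trace_comp_econdR φ hρ⟩

theorem IsRightCondExpMap.mul_inner_eq {φ : ι → H} (hφ : Orthonormal ℂ φ) {ρ : H →ₗ[ℂ] H}
    {E : (H →ₗ[ℂ] H) → (H →ₗ[ℂ] H)} (hE : IsRightCondExpMap φ ρ E) {X : H →ₗ[ℂ] H}
    {g : ι → ℂ} (hg : E X = opF φ g) (i : ι) :
    g i * inner ℂ (φ i) (ρ (φ i)) = inner ℂ (φ i) ((ρ ∘ₗ X) (φ i)) := by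
  classical
  obtain ⟨-, pull_out, trace_eq⟩ := hE
  have h := trace_eq (X ∘ₗ opF φ (Pi.single i 1))
  rw [pull_out, hg, opF_comp_opF hφ, trace_comp_opF, ← LinearMap.comp_assoc, trace_comp_opF] at h
  simpa [Pi.single_apply] using h

theorem IsRightCondExpMap.eq_econdR {φ : ι → H} (hφ : Orthonormal ℂ φ) {ρ : H →ₗ[ℂ] H}
    (hρ : ∀ i, inner ℂ (φ i) (ρ (φ i)) ≠ 0) {E : (H →ₗ[ℂ] H) → (H →ₗ[ℂ] H)}
    (hE : IsRightCondExpMap φ ρ E) : E = EcondR φ ρ := by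
  ext1 X
  obtain ⟨g, hg⟩ := hE.1 X
  rw [hg, econdR_eq_opF]
  congr 1
  ext i
  exact eq_div_of_mul_eq (hρ i) (hE.mul_inner_eq hφ hg i)

end Trace

theorem stmt7_general {ι : Type*} [Fintype ι] (φ : OrthonormalBasis ι ℂ H) {ρ : H →ₗ[ℂ] H}
    (hρ : ∀ i, inner ℂ (φ i) (ρ (φ i)) ≠ 0) (E : (H →ₗ[ℂ] H) → (H →ₗ[ℂ] H)) :
    IsRightCondExpMap φ ρ E ↔ E = EcondR φ ρ :=
  ⟨fun hE => hE.eq_econdR φ.orthonormal hρ, fun hE => hE ▸ isRightCondExpMap_econdR φ hρ⟩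

/-- there is a unique map `ℰ : 𝓛(H) → 𝒴` with `ℰ(X̂ f(Ŷ)) = f(Ŷ)ℰ(X̂)` and
`Tr(ρ̂ ℰ(X̂)) = Tr(ρ̂ X̂)`; it is `X̂ ↦ 𝔼^r_ρ̂(X̂|Ŷ)`. -/
theorem stmt7 {ι : Type*} [Fintype ι] (φ : OrthonormalBasis ι ℂ H)
    (Y : H →ₗ[ℂ] H) (y : ι → ℝ) (hy : Function.Injective y)
    (hY : ∀ i, Y (φ i) = (y i : ℂ) • φ i)
    (ρ : H →ₗ[ℂ] H) (hpos : ∀ v, 0 ≤ (inner ℂ v (ρ v) : ℂ))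
    (htr : LinearMap.trace ℂ H ρ = 1)
    (hρ : ∀ i, (inner ℂ (φ i) (ρ (φ i)) : ℂ) ≠ 0) :
    (∃! E : (H →ₗ[ℂ] H) → (H →ₗ[ℂ] H), IsRightCondExpMap (fun i => φ i) ρ E) ∧
    (∀ E : (H →ₗ[ℂ] H) → (H →ₗ[ℂ] H), IsRightCondExpMap (fun i => φ i) ρ E →
      E = fun X => EcondR (fun i => φ i) ρ X) := by
  have h := stmt7_general φ hρ
  exact ⟨⟨_, (h _).2 rfl, fun E => (h E).1⟩, fun E => (h E).1⟩
end
end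

section
/- Let H be a finite-dimensional complex Hilbert space, Â and B̂ self-adjoint operators with nondegenerate spectra satisfying ⟨φ_a^Â, φ_b^B̂⟩ ≠ 0 for all (a,b). Then the family T^ℓ_{a,b} = (1/|⟨φ_a^Â, φ_b^B̂⟩|²) Π_a^Â Π_b^B̂ is the dual frame of the left Kirkwood-Dirac frame S^ℓ_{a,b} = Π_a^Â Π_b^B̂, i.e., Tr(T^ℓ_{a',b'} (S^ℓ_{a,b})†) = δ_{a,a'} δ_{b,b'} for all (a,b),(a',b') ∈ σ(Â)×σ(B̂); similarly T^r_{a,b} = (1/|⟨φ_a^Â, φ_b^B̂⟩|²) Π_b^B̂ Π_a^Â is the dual frame of S^r_{a,b} = Π_b^B̂ Π_a^Â. -/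
open scoped ComplexOrder
noncomputable section

variable {H : Type*} [NormedAddCommGroup H] [InnerProductSpace ℂ H] [FiniteDimensional ℂ H]

/-! The operators `Π_u Π_v = ⟪u, v⟫ |u⟩⟨v|` built from two orthonormal families are pairwise
orthogonal for the Hilbert–Schmidt inner product `Tr (T S†)`, with squared norm `|⟪u, v⟫|²`.
As for any orthogonal basis, the dual family is obtained by dividing each element by its squared
norm. The right frame is the left frame of the two families in the opposite order. -/

open InnerProductSpace

section InnerProduct

variable {𝕜 E : Type*} [RCLike 𝕜] [SeminormedAddCommGroup E] [InnerProductSpace 𝕜 E]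

theorem inner_mul_symm_eq_norm_sq (u v : E) : ⟪u, v⟫_𝕜 * ⟪v, u⟫_𝕜 = (‖⟪u, v⟫_𝕜‖ : 𝕜) ^ 2 := by
  rw [← inner_conj_symm v u, RCLike.mul_conj]

end InnerProduct

section RankOne

variable {E : Type*} [NormedAddCommGroup E] [InnerProductSpace ℂ E]

theorem proj_eq_rankOne (v : E) : proj v = (rankOne ℂ v v : E →ₗ[ℂ] E) := rfl

theorem proj_comp_proj (u v : E) :
    proj u ∘ₗ proj v = ⟪u, v⟫_ℂ • (rankOne ℂ u v : E →ₗ[ℂ] E) := by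
  rw [proj_eq_rankOne, proj_eq_rankOne, ← ContinuousLinearMap.toLinearMap_comp,
    rankOne_comp_rankOne, ContinuousLinearMap.toLinearMap_smul]

end RankOne

theorem adjoint_proj (v : H) : LinearMap.adjoint (proj v) = proj v :=
  (isSymmetric_rankOne_self v).adjoint_eq

theorem trace_proj_comp_proj_comp_proj_comp_proj (u v w x : H) :
    LinearMap.trace ℂ H ((proj u ∘ₗ proj v) ∘ₗ (proj w ∘ₗ proj x)) =
      ⟪u, v⟫_ℂ * ⟪v, w⟫_ℂ * ⟪w, x⟫_ℂ * ⟪x, u⟫_ℂ := by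
  rw [proj_comp_proj, proj_comp_proj, LinearMap.smul_comp, LinearMap.comp_smul,
    ← ContinuousLinearMap.toLinearMap_comp, rankOne_comp_rankOne,
    ContinuousLinearMap.toLinearMap_smul, map_smul, map_smul, map_smul, trace_rankOne]
  simp only [smul_eq_mul]
  ring

section KirkwoodDirac

variable {ι κ : Type*} {φ : ι → H} {ψ : κ → H}

/-- The left Kirkwood–Dirac frame `S_{i,j} = Π_{φ i} Π_{ψ j}` of two families of vectors. The right
frame of `φ` and `ψ` is `kdFrame ψ φ`, with the two indices exchanged. -/
def kdFrame (φ : ι → H) (ψ : κ → H) (i : ι) (j : κ) : H →ₗ[ℂ] H :=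
  proj (φ i) ∘ₗ proj (ψ j)

/-- The family `T_{i,j} = |⟪φ i, ψ j⟫|⁻² Π_{φ i} Π_{ψ j}`, which for orthonormal `φ` and `ψ` is dual
to `kdFrame φ ψ`. It takes the junk value `0` where `⟪φ i, ψ j⟫ = 0`. -/
def kdDualFrame (φ : ι → H) (ψ : κ → H) (i : ι) (j : κ) : H →ₗ[ℂ] H :=
  ((1 : ℂ) / ((‖⟪φ i, ψ j⟫_ℂ‖ ^ 2 : ℝ) : ℂ)) • kdFrame φ ψ i j

theorem adjoint_kdFrame (φ : ι → H) (ψ : κ → H) (i : ι) (j : κ) :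
    LinearMap.adjoint (kdFrame φ ψ i j) = kdFrame ψ φ j i := by
  simp only [kdFrame, LinearMap.adjoint_comp, adjoint_proj]

variable [DecidableEq ι] [DecidableEq κ]

theorem trace_kdFrame_comp_adjoint_kdFrame (hφ : Orthonormal ℂ φ) (hψ : Orthonormal ℂ ψ)
    (i i' : ι) (j j' : κ) :
    LinearMap.trace ℂ H (kdFrame φ ψ i' j' ∘ₗ LinearMap.adjoint (kdFrame φ ψ i j)) =
      if i = i' ∧ j = j' then (‖⟪φ i', ψ j'⟫_ℂ‖ : ℂ) ^ 2 else 0 := by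
  have bargmann : LinearMap.trace ℂ H (kdFrame φ ψ i' j' ∘ₗ LinearMap.adjoint (kdFrame φ ψ i j)) =
      ⟪φ i', ψ j'⟫_ℂ * ⟪ψ j', ψ j⟫_ℂ * ⟪ψ j, φ i⟫_ℂ * ⟪φ i, φ i'⟫_ℂ := by
    rw [adjoint_kdFrame]
    exact trace_proj_comp_proj_comp_proj_comp_proj _ _ _ _
  rw [bargmann]
  split_ifs with h
  · obtain ⟨rfl, rfl⟩ := h
    rw [inner_self_eq_one_of_norm_eq_one (hφ.1 i), inner_self_eq_one_of_norm_eq_one (hψ.1 j),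
      mul_one, mul_one]
    exact inner_mul_symm_eq_norm_sq (φ i) (ψ j)
  · rcases not_and_or.mp h with hi | hj
    · rw [hφ.inner_eq_zero hi, mul_zero]
    · rw [hψ.inner_eq_zero (Ne.symm hj), mul_zero, zero_mul, zero_mul]

theorem trace_kdDualFrame_comp_adjoint_kdFrame (hφ : Orthonormal ℂ φ) (hψ : Orthonormal ℂ ψ)
    (i : ι) {i' : ι} (j : κ) {j' : κ} (h : ⟪φ i', ψ j'⟫_ℂ ≠ 0) :
    LinearMap.trace ℂ H (kdDualFrame φ ψ i' j' ∘ₗ LinearMap.adjoint (kdFrame φ ψ i j)) =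
      if i = i' ∧ j = j' then 1 else 0 := by
  have norm_sq_ne_zero : (‖⟪φ i', ψ j'⟫_ℂ‖ : ℂ) ^ 2 ≠ 0 :=
    pow_ne_zero 2 (Complex.ofReal_ne_zero.mpr (norm_ne_zero_iff.mpr h))
  rw [kdDualFrame, Complex.ofReal_pow, LinearMap.smul_comp, map_smul,
    trace_kdFrame_comp_adjoint_kdFrame hφ hψ, smul_eq_mul, mul_ite,
    one_div_mul_cancel norm_sq_ne_zero, mul_zero]

end KirkwoodDirac

theorem stmt14_general {ιA ιB : Type*} [DecidableEq ιA] [DecidableEq ιB]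
    {φA : ιA → H} {φB : ιB → H} (hφA : Orthonormal ℂ φA) (hφB : Orthonormal ℂ φB)
    (hAB : ∀ (a : ιA) (b : ιB), ⟪φA a, φB b⟫_ℂ ≠ 0) :
    (∀ (a a' : ιA) (b b' : ιB),
      LinearMap.trace ℂ H
          ((((1 : ℂ) / ((‖⟪φA a', φB b'⟫_ℂ‖ ^ 2 : ℝ) : ℂ)) •
              (proj (φA a') ∘ₗ proj (φB b'))) ∘ₗ
            LinearMap.adjoint (proj (φA a) ∘ₗ proj (φB b))) =
        if a = a' ∧ b = b' then 1 else 0) ∧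
    (∀ (a a' : ιA) (b b' : ιB),
      LinearMap.trace ℂ H
          ((((1 : ℂ) / ((‖⟪φA a', φB b'⟫_ℂ‖ ^ 2 : ℝ) : ℂ)) •
              (proj (φB b') ∘ₗ proj (φA a'))) ∘ₗ
            LinearMap.adjoint (proj (φB b) ∘ₗ proj (φA a))) =
        if a = a' ∧ b = b' then 1 else 0) := by
  refine ⟨fun a a' b b' => trace_kdDualFrame_comp_adjoint_kdFrame hφA hφB a b (hAB a' b'),
    fun a a' b b' => ?_⟩
  have hBA : ⟪φB b', φA a'⟫_ℂ ≠ 0 := inner_eq_zero_symm.not.mp (hAB a' b')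
  simp only [norm_inner_symm (φA a'), and_comm (a := a = a')]
  exact trace_kdDualFrame_comp_adjoint_kdFrame hφB hφA b a hBA

/-- `T^ℓ_{a,b} = |⟨φ_a^Â, φ_b^B̂⟩|⁻² Π_a^Â Π_b^B̂` is the dual frame of the left
Kirkwood-Dirac frame `S^ℓ_{a,b} = Π_a^Â Π_b^B̂`, i.e.
`Tr(T^ℓ_{a',b'} (S^ℓ_{a,b})†) = δ_{a,a'}δ_{b,b'}`; similarly
`T^r_{a,b} = |⟨φ_a^Â, φ_b^B̂⟩|⁻² Π_b^B̂ Π_a^Â` is the dual frame of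
`S^r_{a,b} = Π_b^B̂ Π_a^Â`. -/
theorem stmt14 {ιA ιB : Type*} [Fintype ιA] [Fintype ιB] [DecidableEq ιA] [DecidableEq ιB]
    (φA : OrthonormalBasis ιA ℂ H) (φB : OrthonormalBasis ιB ℂ H)
    (A B : H →ₗ[ℂ] H) (α : ιA → ℝ) (β : ιB → ℝ)
    (hα : Function.Injective α) (hβ : Function.Injective β)
    (hA : ∀ a, A (φA a) = (α a : ℂ) • φA a) (hB : ∀ b, B (φB b) = (β b : ℂ) • φB b)
    (hAB : ∀ (a : ιA) (b : ιB), (inner ℂ (φA a) (φB b) : ℂ) ≠ 0) :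
    (∀ (a a' : ιA) (b b' : ιB),
      LinearMap.trace ℂ H
          ((((1 : ℂ) / ((‖(inner ℂ (φA a') (φB b') : ℂ)‖ ^ 2 : ℝ) : ℂ)) •
              (proj (φA a') ∘ₗ proj (φB b'))) ∘ₗ
            LinearMap.adjoint (proj (φA a) ∘ₗ proj (φB b))) =
        if a = a' ∧ b = b' then 1 else 0) ∧
    (∀ (a a' : ιA) (b b' : ιB),
      LinearMap.trace ℂ H
          ((((1 : ℂ) / ((‖(inner ℂ (φA a') (φB b') : ℂ)‖ ^ 2 : ℝ) : ℂ)) •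
              (proj (φB b') ∘ₗ proj (φA a'))) ∘ₗ
            LinearMap.adjoint (proj (φB b) ∘ₗ proj (φA a))) =
        if a = a' ∧ b = b' then 1 else 0) :=
  stmt14_general φA.orthonormal φB.orthonormal hAB
end
end
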